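/- For every n ≥ 1 and every integer r ≥ 0, Σ_{w ∈ X_n} C(n + r − basc(w), n) = (r+1)·(2r+1)^{n−1}, where C(a,b) is the binomial coefficient. (Equivalently, the Ehrhart h*-polynomial of the type C fundamental parallelepiped Π_{C_n}, whose Ehrhart polynomial with respect to ½ℤⁿ is (r+1)(2r+1)^{n−1}, equals Σ_{w ∈ X_n} t^{basc(w)}.) -/

import Mathlib

/-!
The identity is proved by induction on `n`, inserting the letter `±(n+1)` into a word of `X_n`.

Read `w` as the word `0 w_1 ⋯ w_n 0`; since `0 ≪ b` means `b ≥ 2` and `a ≪ 0` means `a ≤ -2`,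
`basc w` is the number of gaps `(a, b)` of this word with `a ≪ b` (`basc_eq_sum`). Put `N = n + 1`.
Inserting `N` into the gap `(a, b)` creates the big ascent `a ≪ N` unless `a = n`, and never one
between `N` and `b`; dually, inserting `-N` creates `-N ≪ b` unless `b = -n`. Hence an insertion
leaves `basc` unchanged if the gap was a big ascent or the inserted letter lands immediately to the
right of `n` (for `N`), immediately to the left of `-n` (for `-N`), and raises it by one otherwise.
As exactly one of `n`, `-n` occurs in `w`, a word with `basc w = k` has `2k + 1` children with `k`
big ascents and `2n + 1 - 2k` children with `k + 1`. Every word of `X_{n+1}` arises exactly once,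
and the claim follows from
`(2k+1) C(n+1+r-k, n+1) + (2n+1-2k) C(n+r-k, n+1) = (2r+1) C(n+r-k, n)`.

Insertion is right multiplication by an explicit odd permutation `ins N j` of `ℤ`, which sends the
signed position `j` to `N` and closes up the positions beyond `|j|`.
-/

open scoped Classical

/-- A signed permutation of length `n`: a permutation `w` of `ℤ` with
`w(-i) = -w(i)` that fixes every integer of absolute value greater than `n`. -/
def IsSignedPerm (n : ℕ) (w : Equiv.Perm ℤ) : Prop :=
  (∀ i : ℤ, w (-i) = - w i) ∧ ∀ i : ℤ, (n : ℤ) < |i| → w i = i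

/-- Membership in `X_n := {w ∈ 𝔅_n : w⁻¹(1) > 0}`. -/
def InXn (n : ℕ) (w : Equiv.Perm ℤ) : Prop :=
  IsSignedPerm n w ∧ 0 < w.symm 1

/-- The type B descent number `des_B(w) = #{i ∈ {0,…,n-1} : w_i > w_{i+1}}`,
with the convention `w_0 = 0` (automatic, since a signed permutation fixes `0`). -/
noncomputable def desB (n : ℕ) (w : Equiv.Perm ℤ) : ℕ :=
  ((Finset.range n).filter fun i => w ((i : ℤ) + 1) < w (i : ℤ)).card

/-- The flag-excedance `fexc(w) = 2·#{i : w_i > i} + #{i : w_i < 0}`. -/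
noncomputable def fexc (n : ℕ) (w : Equiv.Perm ℤ) : ℕ :=
  2 * ((Finset.Icc (1 : ℤ) (n : ℤ)).filter fun i => i < w i).card
    + ((Finset.Icc (1 : ℤ) (n : ℤ)).filter fun i => w i < 0).card

/-- The cyclic successor on `{-n,…,-1,1,…,n}` (with `(-1)⁺ = 1` and `n⁺ = -n`). -/
def csucc (n : ℕ) (i : ℤ) : ℤ :=
  if i = -1 then 1 else if i = (n : ℤ) then -(n : ℤ) else i + 1

/-- The circular descent set `CDes(w) = {i ∈ {-n,…,-1,1,…,n} : w(i) > w(i⁺)}`. -/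
noncomputable def cdesSet (n : ℕ) (w : Equiv.Perm ℤ) : Finset ℤ :=
  (Finset.Icc (-(n : ℤ)) (n : ℤ)).filter fun i => i ≠ 0 ∧ w (csucc n i) < w i

/-- The circular descent number `cdes(w) = |CDes(w)|`. -/
noncomputable def cdes (n : ℕ) (w : Equiv.Perm ℤ) : ℕ := (cdesSet n w).card

/-- `a ≪ b`: there is a nonzero integer strictly between `a` and `b`. -/
def Lll (a b : ℤ) : Prop := ∃ c : ℤ, c ≠ 0 ∧ a < c ∧ c < b

/-- The big ascent number `basc(w) = |BAsc(w)|`, where `BAsc(w) ⊆ {-1,1,…,n}`: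
`-1 ∈ BAsc(w)` iff `w_1 ≥ 2`; for `1 ≤ i ≤ n-1`, `i ∈ BAsc(w)` iff `w_i ≪ w_{i+1}`;
and `n ∈ BAsc(w)` iff `w_n ≤ -2`. -/
noncomputable def basc (n : ℕ) (w : Equiv.Perm ℤ) : ℕ :=
  ((insert (-1 : ℤ) (Finset.Icc (1 : ℤ) (n : ℤ))).filter fun i =>
    if i = -1 then 2 ≤ w 1
    else if i = (n : ℤ) then w (n : ℤ) ≤ -2
    else Lll (w i) (w (i + 1))).card

/-- `L'_{n,k}(r)`: the number of half-integer points in the `r`-th dilate of the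
half-open type C hypersimplex `Δ'_{C_n,k}`, in the `y`-coordinates. -/
noncomputable def Lp (n k r : ℕ) : ℕ :=
  if k = 1 then
    Set.ncard {y : Fin n → ℤ |
      (∀ j, 0 ≤ y j ∧ y j ≤ 2 * (r : ℤ)) ∧ (∀ j : Fin n, (j : ℕ) = 0 → y j ≤ (r : ℤ)) ∧
      0 ≤ ∑ j, y j ∧ ∑ j, y j ≤ (r : ℤ)}
  else
    Set.ncard {y : Fin n → ℤ |
      (∀ j, 0 ≤ y j ∧ y j ≤ 2 * (r : ℤ)) ∧ (∀ j : Fin n, (j : ℕ) = 0 → y j ≤ (r : ℤ)) ∧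
      ((k : ℤ) - 1) * r < ∑ j, y j ∧ ∑ j, y j ≤ (k : ℤ) * r}

/-- `L_{n,k}(r)`: the number of half-integer points in the `r`-th dilate of the
closed type C hypersimplex `Δ_{C_n,k}`, in the `y`-coordinates. -/
noncomputable def Lc (n k r : ℕ) : ℕ :=
  Set.ncard {y : Fin n → ℤ |
    (∀ j, 0 ≤ y j ∧ y j ≤ 2 * (r : ℤ)) ∧ (∀ j : Fin n, (j : ℕ) = 0 → y j ≤ (r : ℤ)) ∧
    ((k : ℤ) - 1) * r ≤ ∑ j, y j ∧ ∑ j, y j ≤ (k : ℤ) * r}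

/-- `ψ_{n,k} = #{w ∈ X_n : basc(w) = k}`. -/
noncomputable def psiN (n k : ℕ) : ℕ :=
  {w : Equiv.Perm ℤ | InXn n w ∧ basc n w = k}.ncard

/-- `ψ_{n,k}` with an integer index (`0` for negative `k`). -/
noncomputable def psiZ (n : ℕ) (k : ℤ) : ℕ :=
  {w : Equiv.Perm ℤ | InXn n w ∧ (basc n w : ℤ) = k}.ncard

/-- `Ψ_{C_n}(t) = Σ_k ψ_{n,k} t^k ∈ ℤ[t]`. -/
noncomputable def PsiC (n : ℕ) : Polynomial ℤ :=
  ∑ᶠ k : ℕ, (psiN n k : Polynomial ℤ) * Polynomial.X ^ k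

/-- `Ψ_{C_n}(t)` with rational coefficients. -/
noncomputable def PsiCQ (n : ℕ) : Polynomial ℚ :=
  ∑ᶠ k : ℕ, (psiN n k : Polynomial ℚ) * Polynomial.X ^ k

/-- The descent number of a permutation of `{1,…,m}`. -/
noncomputable def desA (m : ℕ) (σ : Equiv.Perm (Fin m)) : ℕ :=
  (Finset.univ.filter fun i : Fin m =>
    ∃ h : (i : ℕ) + 1 < m, σ ⟨(i : ℕ) + 1, h⟩ < σ i).card

/-- The classical (type A) Eulerian polynomial `E_m^A(t) = Σ_{σ ∈ S_m} t^{des σ}`. -/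
noncomputable def EulerianA (m : ℕ) : Polynomial ℚ :=
  ∑ σ : Equiv.Perm (Fin m), Polynomial.X ^ desA m σ

/-- The relation `u ⇀ w` on `X_n`. -/
def covRel (n : ℕ) (u w : Equiv.Perm ℤ) : Prop :=
  InXn n u ∧ InXn n w ∧
    ((2 ≤ w 1 ∧ u = w * Equiv.swap (1 : ℤ) (-1)) ∨
     (∃ i : ℤ, 1 ≤ i ∧ i ≤ (n : ℤ) - 1 ∧ Lll (w i) (w (i + 1)) ∧
        u = w * (Equiv.swap i (i + 1) * Equiv.swap (-i) (-(i + 1)))) ∨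
     (w (n : ℤ) ≤ -2 ∧ u = w * Equiv.swap (n : ℤ) (-(n : ℤ))))

/-- The `i`-th coordinate (`1 ≤ i ≤ n`) of the vertex `v^j(w)` (`1 ≤ j ≤ n+1`):
`v^{n+1}_i(w) = #({1,…,i-1} ∩ CDes(w⁻¹))` and `v^j = v^{j+1} + ½ e_{w_j}`. -/
noncomputable def vcoord (n : ℕ) (w : Equiv.Perm ℤ) (j : ℕ) (i : ℕ) : ℚ :=
  ((Finset.Icc (1 : ℤ) ((i : ℤ) - 1) ∩ cdesSet n w.symm).card : ℚ)
    + (1 / 2) * ∑ m ∈ Finset.Icc (j : ℤ) (n : ℤ),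
        (if w m = (i : ℤ) then (1 : ℚ) else if w m = -(i : ℤ) then -1 else 0)

/-- `u` is the image `τ_n(w)`: in window notation `u = 1 w'_1 ⋯ w'_n`, where
`w'_i = w_i + 1` if `w_i > 0` and `w'_i = w_i - 1` if `w_i < 0`. -/
def isTau (n : ℕ) (w u : Equiv.Perm ℤ) : Prop :=
  u 1 = 1 ∧ ∀ i : ℤ, 1 ≤ i → i ≤ (n : ℤ) →
    u (i + 1) = if 0 < w i then w i + 1 else w i - 1

/-! ### Insertion of a letter -/

/-- The odd map underlying `ins`: `±j ↦ ±N`, positions beyond `|j|` and up to `N` move one step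
towards `0`, and all other integers are fixed. -/
def insFun (N j i : ℤ) : ℤ :=
  if i = j then N else if i = -j then -N
  else if j < i ∧ -j < i ∧ i ≤ N then i - 1
  else if i < j ∧ i < -j ∧ -N ≤ i then i + 1 else i

/-- The inverse of `insFun N j`. -/
def insInv (N j i : ℤ) : ℤ :=
  if i = N then j else if i = -N then -j
  else if j ≤ i ∧ -j ≤ i ∧ i < N then i + 1
  else if i ≤ j ∧ i ≤ -j ∧ -N < i then i - 1 else i

/-- The signed permutation for which `w ↦ w * ins N j` inserts the letter `N` at position `j`
(for `j > 0`), or the letter `-N` at position `-j` (for `j < 0`), into a word of length `N - 1`.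
Outside the range `1 ≤ |j| ≤ N` the value is irrelevant and set to `1`. -/
noncomputable def ins (N j : ℤ) : Equiv.Perm ℤ :=
  if h : j ≠ 0 ∧ -N ≤ j ∧ j ≤ N then
    { toFun := insFun N j
      invFun := insInv N j
      left_inv := by
        intro i
        obtain ⟨h0, h1, h2⟩ := h
        unfold insFun
        split_ifs <;> unfold insInv <;> grind
      right_inv := by
        intro i
        obtain ⟨h0, h1, h2⟩ := h
        unfold insInv
        split_ifs <;> unfold insFun <;> grind }
  else 1

lemma ins_apply {N j : ℤ} (h : j ≠ 0 ∧ -N ≤ j ∧ j ≤ N) (i : ℤ) : ins N j i = insFun N j i := by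
  unfold ins
  rw [dif_pos h]
  rfl

lemma ins_neg {N j : ℤ} (h : j ≠ 0 ∧ -N ≤ j ∧ j ≤ N) (i : ℤ) :
    ins N j (-i) = - ins N j i := by
  rw [ins_apply h, ins_apply h]
  unfold insFun
  grind

lemma ins_self {N j : ℤ} (h : j ≠ 0 ∧ -N ≤ j ∧ j ≤ N) : ins N j j = N := by
  rw [ins_apply h]
  simp [insFun]

lemma ins_fix {N j : ℤ} (h : j ≠ 0 ∧ -N ≤ j ∧ j ≤ N) {i : ℤ} (hi : N < |i|) :
    ins N j i = i := by
  rw [ins_apply h]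
  unfold insFun
  grind

lemma signed_zero {n : ℕ} {w : Equiv.Perm ℤ} (hw : IsSignedPerm n w) : w 0 = 0 := by
  have := hw.1 0
  simp at this
  omega

lemma signed_bound {n : ℕ} {w : Equiv.Perm ℤ} (hw : IsSignedPerm n w) {i : ℤ} (hi : |i| ≤ n) :
    |w i| ≤ n := by
  by_contra! h
  have h2 := w.injective (hw.2 _ h)
  rw [h2] at h
  omega

lemma signed_symm_bound {n : ℕ} {w : Equiv.Perm ℤ} (hw : IsSignedPerm n w) {i : ℤ}
    (hi : |i| ≤ n) : |w.symm i| ≤ n := by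
  by_contra! h
  have h2 := hw.2 _ h
  rw [Equiv.apply_symm_apply] at h2
  rw [← h2] at h
  omega

lemma inXn_mul_ins {n : ℕ} (hn : 1 ≤ n) {w : Equiv.Perm ℤ} (hw : InXn n w) {j : ℤ}
    (hj : j ≠ 0 ∧ -((n + 1 : ℕ) : ℤ) ≤ j ∧ j ≤ (n + 1 : ℕ)) :
    InXn (n + 1) (w * ins (n + 1 : ℕ) j) := by
  refine ⟨⟨fun i => ?_, fun i hi => ?_⟩, ?_⟩
  · simp only [Equiv.Perm.mul_apply]
    rw [ins_neg hj, hw.1.1]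
  · simp only [Equiv.Perm.mul_apply]
    rw [ins_fix hj hi, hw.1.2]
    push_cast at hi
    omega
  · have h1 : (w * ins (n + 1 : ℕ) j).symm 1 = (ins (n + 1 : ℕ) j).symm (w.symm 1) := rfl
    rw [h1]
    have hb := signed_symm_bound hw.1 (i := 1) (by simp; omega)
    have hp := hw.2
    generalize w.symm 1 = m at hb hp
    obtain ⟨i, rfl⟩ := (ins (n + 1 : ℕ) j).surjective m
    rw [Equiv.symm_apply_apply]
    rw [ins_apply hj] at hb hp
    unfold insFun at hb hp
    grind

/-- Every word of `X_{n+1}` is an insertion: delete the letter `±(n+1)`. -/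
lemma exists_eq_mul_ins {n : ℕ} (hn : 1 ≤ n) {w : Equiv.Perm ℤ} (hw : InXn (n + 1) w) :
    ∃ v j, InXn n v ∧ (j ≠ 0 ∧ -((n + 1 : ℕ) : ℤ) ≤ j ∧ j ≤ (n + 1 : ℕ)) ∧
      v * ins (n + 1 : ℕ) j = w := by
  obtain ⟨j, hwj⟩ := w.surjective ((n + 1 : ℕ) : ℤ)
  have hj0 : j ≠ 0 := by
    rintro rfl
    rw [signed_zero hw.1] at hwj
    omega
  have hjb := signed_symm_bound hw.1 (i := (n + 1 : ℕ)) (Nat.abs_cast _).le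
  rw [w.symm_apply_eq.2 hwj.symm, abs_le] at hjb
  have hj : j ≠ 0 ∧ -((n + 1 : ℕ) : ℤ) ≤ j ∧ j ≤ (n + 1 : ℕ) := ⟨hj0, hjb⟩
  refine ⟨w * (ins (n + 1 : ℕ) j)⁻¹, j, ⟨⟨fun i => ?_, fun i hi => ?_⟩, ?_⟩, hj, by simp⟩
  · obtain ⟨i, rfl⟩ := (ins (n + 1 : ℕ) j).surjective i
    rw [← ins_neg hj]
    simp [hw.1.1]
  · by_cases h : ((n + 1 : ℕ) : ℤ) < |i|
    · have h3 : (ins (n + 1 : ℕ) j)⁻¹ i = i := by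
        rw [Equiv.Perm.inv_eq_iff_eq, ins_fix hj h]
      rw [Equiv.Perm.mul_apply, h3, hw.1.2 i h]
    · have h4 : |i| = ((n + 1 : ℕ) : ℤ) := by push_cast at h ⊢; omega
      rcases eq_or_eq_neg_of_abs_eq h4 with rfl | rfl
      · have h3 : (ins (n + 1 : ℕ) j)⁻¹ ((n + 1 : ℕ) : ℤ) = j := by
          rw [Equiv.Perm.inv_eq_iff_eq, ins_self hj]
        rw [Equiv.Perm.mul_apply, h3, hwj]
      · have h3 : (ins (n + 1 : ℕ) j)⁻¹ (-((n + 1 : ℕ) : ℤ)) = -j := by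
          rw [Equiv.Perm.inv_eq_iff_eq, ins_neg hj, ins_self hj]
        rw [Equiv.Perm.mul_apply, h3, hw.1.1, hwj]
  · have h1 : (w * (ins (n + 1 : ℕ) j)⁻¹).symm 1 = ins (n + 1 : ℕ) j (w.symm 1) := rfl
    rw [h1, ins_apply hj]
    have hp := hw.2
    have hne : w.symm 1 ≠ j ∧ w.symm 1 ≠ -j := by
      constructor
      · intro h
        rw [Equiv.symm_apply_eq, hwj] at h
        omega
      · intro h
        rw [Equiv.symm_apply_eq, hw.1.1, hwj] at h
        omega
    unfold insFun
    grind

lemma mul_ins_injective {n : ℕ} {v v' : Equiv.Perm ℤ} (hv : IsSignedPerm n v)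
    (hv' : IsSignedPerm n v') {j j' : ℤ}
    (hj : j ≠ 0 ∧ -((n + 1 : ℕ) : ℤ) ≤ j ∧ j ≤ (n + 1 : ℕ))
    (hj' : j' ≠ 0 ∧ -((n + 1 : ℕ) : ℤ) ≤ j' ∧ j' ≤ (n + 1 : ℕ))
    (h : v * ins (n + 1 : ℕ) j = v' * ins (n + 1 : ℕ) j') : v = v' ∧ j = j' := by
  have hfix : (n : ℤ) < |((n + 1 : ℕ) : ℤ)| := by
    rw [Nat.abs_cast]
    omega
  have hjj : j = j' := by
    have h1 : (v * ins (n + 1 : ℕ) j) j = ((n + 1 : ℕ) : ℤ) := by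
      rw [Equiv.Perm.mul_apply, ins_self hj, hv.2 _ hfix]
    have h2 : (v * ins (n + 1 : ℕ) j) j' = ((n + 1 : ℕ) : ℤ) := by
      rw [h, Equiv.Perm.mul_apply, ins_self hj', hv'.2 _ hfix]
    exact (v * ins (n + 1 : ℕ) j).injective (h1.trans h2.symm)
  subst hjj
  exact ⟨mul_right_cancel h, rfl⟩

/-! ### Big ascents as gaps of the word `0 w_1 ⋯ w_n 0` -/

/-- The letters of the extended word `0 w_1 ⋯ w_n 0` (the initial `0` is `w 0`). -/
noncomputable def ext (n : ℕ) (w : Equiv.Perm ℤ) (i : ℕ) : ℤ := if i ≤ n then w i else 0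

/-- The indicator of `a ≪ b`. -/
noncomputable def bigAsc (a b : ℤ) : ℤ := if Lll a b then 1 else 0

lemma lll_iff (a b : ℤ) : Lll a b ↔ a + 2 < b ∨ (a + 2 = b ∧ a ≠ -1) := by
  constructor
  · rintro ⟨c, h0, h1, h2⟩
    omega
  · intro h
    by_cases h1 : a = -1
    · exact ⟨1, by omega, by omega, by omega⟩
    · exact ⟨a + 1, by omega, by omega, by omega⟩

lemma basc_eq_sum {n : ℕ} (hn : 1 ≤ n) {w : Equiv.Perm ℤ} (hw : IsSignedPerm n w) :
    (basc n w : ℤ) = ∑ p ∈ Finset.range (n + 1), bigAsc (ext n w p) (ext n w (p + 1)) := by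
  unfold bigAsc
  rw [Finset.sum_boole]
  congr 1
  have h0 := signed_zero hw
  unfold basc
  symm
  have key : ∀ p ∈ Finset.range (n + 1), (Lll (ext n w p) (ext n w (p + 1)) ↔
      (if (if p = 0 then (-1 : ℤ) else p) = -1 then 2 ≤ w 1
        else if (if p = 0 then (-1 : ℤ) else p) = (n : ℤ) then w (n : ℤ) ≤ -2
        else Lll (w (if p = 0 then (-1 : ℤ) else p)) (w ((if p = 0 then (-1 : ℤ) else p) + 1)))) := by
    intro p hp
    rw [Finset.mem_range] at hp
    unfold ext
    rcases Nat.eq_zero_or_pos p with rfl | hp0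
    · simp [h0, hn, lll_iff]
      omega
    · have e1 : ¬ ((p : ℤ) = -1) := by omega
      rw [if_neg hp0.ne', if_neg e1]
      by_cases hpn : p = n
      · subst hpn
        simp [lll_iff]
        omega
      · have e2 : ¬ ((p : ℤ) = n) := by omega
        rw [if_neg e2, if_pos (by omega), if_pos (by omega)]
        push_cast
        rfl
  refine Finset.card_nbij (fun p : ℕ => if p = 0 then (-1 : ℤ) else p) ?_ ?_ ?_
  · intro p hp
    rw [Finset.mem_coe, Finset.mem_filter] at hp ⊢
    refine ⟨?_, (key p hp.1).1 hp.2⟩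
    have := hp.1
    rw [Finset.mem_range] at this
    simp only [Finset.mem_insert, Finset.mem_Icc]
    grind
  · intro p _ q _ h
    simp only at h
    grind
  · intro i hi
    rw [Finset.mem_coe, Finset.mem_filter] at hi
    obtain ⟨hi1, hi2⟩ := hi
    simp only [Finset.mem_insert, Finset.mem_Icc] at hi1
    obtain ⟨p, hp, rfl⟩ : ∃ p ∈ Finset.range (n + 1), (if p = 0 then (-1 : ℤ) else p) = i := by
      rcases hi1 with rfl | hi1
      · exact ⟨0, by simp, by simp⟩
      · refine ⟨i.toNat, by rw [Finset.mem_range]; omega, ?_⟩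
        rw [if_neg (by omega)]
        omega
    refine ⟨p, ?_, rfl⟩
    rw [Finset.mem_coe, Finset.mem_filter]
    exact ⟨hp, (key p hp).2 hi2⟩

/-! ### The effect of an insertion on `basc` -/

/-- The effect on a sum over gaps of inserting the letter `x` into the gap `(e p, e (p + 1))`. -/
lemma sum_insert_letter (g : ℤ → ℤ → ℤ) (e e' : ℕ → ℤ) (x : ℤ) (p q : ℕ)
    (h1 : ∀ i ≤ p, e' i = e i) (h2 : e' (p + 1) = x) (h3 : ∀ i, p < i → e' (i + 1) = e i) :
    ∑ i ∈ Finset.range (p + q + 2), g (e' i) (e' (i + 1)) =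
      ∑ i ∈ Finset.range (p + q + 1), g (e i) (e (i + 1))
        + (g (e p) x + g x (e (p + 1)) - g (e p) (e (p + 1))) := by
  induction q with
  | zero =>
    have hs : ∑ i ∈ Finset.range p, g (e' i) (e' (i + 1)) =
        ∑ i ∈ Finset.range p, g (e i) (e (i + 1)) := by
      refine Finset.sum_congr rfl fun i hi => ?_
      rw [Finset.mem_range] at hi
      rw [h1 i (by omega), h1 (i + 1) (by omega)]
    simp only [add_zero, Finset.sum_range_succ, hs, h2, h1 p le_rfl, h3 (p + 1) (by omega)]
    ring
  | succ q ih =>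
    rw [show p + (q + 1) + 2 = (p + q + 2) + 1 by ring, Finset.sum_range_succ, ih,
      show p + (q + 1) + 1 = (p + q + 1) + 1 by ring,
      Finset.sum_range_succ _ (p + q + 1), h3 (p + q + 1 + 1) (by omega),
      h3 (p + q + 1) (by omega)]
    ring

/-- The signed position `±(p + 1)` encoded by `p` and a sign. -/
def pos (p : ℕ) (s : Bool) : ℤ := if s then (p : ℤ) + 1 else -((p : ℤ) + 1)

lemma pos_range {n p : ℕ} (hp : p < n + 1) (s : Bool) :
    pos p s ≠ 0 ∧ -((n + 1 : ℕ) : ℤ) ≤ pos p s ∧ pos p s ≤ (n + 1 : ℕ) := by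
  unfold pos
  grind

lemma pos_inj {p q : ℕ} {s t : Bool} (h : pos p s = pos q t) : p = q ∧ s = t := by
  unfold pos at h
  grind

/-- The gap between positions `p` and `p + 1` absorbs the insertion of `n + 1` (`s = true`) or of
`-(n + 1)` (`s = false`): the indicator that this insertion does not change `basc`. -/
noncomputable def absorb (n : ℕ) (w : Equiv.Perm ℤ) (p : ℕ) (s : Bool) : ℤ :=
  bigAsc (ext n w p) (ext n w (p + 1)) +
    if s then (if ext n w p = n then 1 else 0) else (if ext n w (p + 1) = -n then 1 else 0)

lemma ext_bound {n : ℕ} {w : Equiv.Perm ℤ} (hw : IsSignedPerm n w) (i : ℕ) :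
    -(n : ℤ) ≤ ext n w i ∧ ext n w i ≤ n := by
  unfold ext
  split_ifs with h
  · exact abs_le.1 (signed_bound hw (by simpa using h))
  · omega

lemma basc_mul_ins {n : ℕ} (hn : 1 ≤ n) {w : Equiv.Perm ℤ} (hw : InXn n w) {p : ℕ}
    (hp : p < n + 1) (s : Bool) :
    (basc (n + 1) (w * ins (n + 1 : ℕ) (pos p s)) : ℤ) = basc n w + 1 - absorb n w p s := by
  have hj := pos_range hp s
  rw [basc_eq_sum (by omega) (inXn_mul_ins hn hw hj).1, basc_eq_sum hn hw.1]
  obtain ⟨q, rfl⟩ : ∃ q, n = p + q := ⟨n - p, by omega⟩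
  have hfix : w ((p + q + 1 : ℕ) : ℤ) = (p + q + 1 : ℕ) := hw.1.2 _ (by rw [Nat.abs_cast]; omega)
  rw [sum_insert_letter bigAsc (ext (p + q) w) _
    (if s then ((p + q + 1 : ℕ) : ℤ) else -((p + q + 1 : ℕ) : ℤ)) p q]
  · have b1 := ext_bound hw.1 p
    have b2 := ext_bound hw.1 (p + 1)
    unfold absorb bigAsc
    simp only [lll_iff]
    push_cast at b1 b2 ⊢
    cases s <;> grind
  · intro i hi
    unfold ext
    rw [if_pos (by omega), if_pos (by omega), Equiv.Perm.mul_apply, ins_apply hj]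
    congr 1
    unfold insFun pos
    grind
  · unfold ext
    rw [if_pos (by omega), Equiv.Perm.mul_apply]
    cases s
    · have : ((p + 1 : ℕ) : ℤ) = -(pos p false) := by simp [pos]
      rw [this, ins_neg hj, ins_self hj, hw.1.1, hfix]
      simp
    · have : ((p + 1 : ℕ) : ℤ) = pos p true := by simp [pos]
      rw [this, ins_self hj, hfix]
      simp
  · intro i hi
    unfold ext
    by_cases hi2 : i ≤ p + q
    · rw [if_pos (by omega), if_pos (by omega), Equiv.Perm.mul_apply, ins_apply hj]
      congr 1
      unfold insFun pos
      grind
    · rw [if_neg (by omega), if_neg (by omega)]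

lemma absorb_eq {n : ℕ} {w : Equiv.Perm ℤ} (hw : InXn n w) (p : ℕ) (s : Bool) :
    absorb n w p s = 0 ∨ absorb n w p s = 1 := by
  have b1 := ext_bound hw.1 p
  have b2 := ext_bound hw.1 (p + 1)
  unfold absorb bigAsc
  simp only [lll_iff]
  cases s <;> grind

/-- Exactly one of the letters `n`, `-n` occurs in `w`. -/
lemma sum_extreme {n : ℕ} (hn : 1 ≤ n) {w : Equiv.Perm ℤ} (hw : IsSignedPerm n w) :
    ∑ p ∈ Finset.range (n + 1), (if ext n w p = n then (1 : ℤ) else 0) +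
      ∑ p ∈ Finset.range (n + 1), (if ext n w (p + 1) = -n then (1 : ℤ) else 0) = 1 := by
  have h0 := signed_zero hw
  rw [Finset.sum_range_succ', Finset.sum_range_succ (fun p => if ext n w (p + 1) = -n then _ else _)]
  have e1 : ext n w 0 = 0 := by simp [ext, h0]
  have e2 : ext n w (n + 1) = 0 := by simp [ext]
  rw [e1, e2, if_neg (by omega), if_neg (by omega), add_zero, add_zero, ← Finset.sum_add_distrib]
  obtain ⟨m, hm⟩ := w.surjective (n : ℤ)
  have hmn : w (-m) = -n := by rw [hw.1, hm]
  have hmb := signed_symm_bound hw (i := n) (by simp)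
  rw [w.symm_apply_eq.2 hm.symm] at hmb
  have hm0 : m ≠ 0 := by
    rintro rfl
    omega
  have hpos : 0 < |m| := abs_pos.2 hm0
  rw [Finset.sum_eq_single ((|m| - 1).toNat)]
  · have hc : (((|m| - 1).toNat + 1 : ℕ) : ℤ) = |m| := by omega
    have hext : ext n w ((|m| - 1).toNat + 1) = w |m| := by
      unfold ext
      rw [if_pos (by omega), hc]
    rw [hext]
    rcases abs_choice m with h | h <;> rw [h]
    · rw [hm]
      grind
    · rw [hmn]
      grind
  · intro p hp hne
    rw [Finset.mem_range] at hp
    have hext : ext n w (p + 1) = w ((p + 1 : ℕ) : ℤ) := if_pos (by omega)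
    have n1 : w ((p + 1 : ℕ) : ℤ) ≠ n := by
      rw [← hm]
      intro h
      have := w.injective h
      grind
    have n2 : w ((p + 1 : ℕ) : ℤ) ≠ -n := by
      rw [← hmn]
      intro h
      have := w.injective h
      grind
    rw [hext, if_neg n1, if_neg n2, add_zero]
  · intro h
    rw [Finset.mem_range] at h
    omega

lemma sum_absorb {n : ℕ} (hn : 1 ≤ n) {w : Equiv.Perm ℤ} (hw : InXn n w) :
    ∑ p ∈ Finset.range (n + 1), (absorb n w p true + absorb n w p false)
      = 2 * basc n w + 1 := by
  rw [basc_eq_sum hn hw.1, ← sum_extreme hn hw.1, Finset.mul_sum, ← Finset.sum_add_distrib,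
    ← Finset.sum_add_distrib]
  refine Finset.sum_congr rfl fun p _ => ?_
  simp [absorb]
  ring

/-- `2k + 1` insertions keep `basc w = k` and `2n + 1 - 2k` raise it by one, for any weight `F`. -/
lemma sum_children {n : ℕ} (hn : 1 ≤ n) {w : Equiv.Perm ℤ} (hw : InXn n w) (F : ℕ → ℤ) :
    ∑ x ∈ Finset.range (n + 1) ×ˢ (Finset.univ : Finset Bool),
        F (basc (n + 1) (w * ins (n + 1 : ℕ) (pos x.1 x.2)))
      = (2 * basc n w + 1) * F (basc n w) + (2 * n + 1 - 2 * basc n w) * F (basc n w + 1) := by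
  have hF : ∀ p ∈ Finset.range (n + 1), ∀ s,
      F (basc (n + 1) (w * ins (n + 1 : ℕ) (pos p s)))
        = F (basc n w + 1) + absorb n w p s * (F (basc n w) - F (basc n w + 1)) := by
    intro p hp s
    have h := basc_mul_ins hn hw (Finset.mem_range.1 hp) s
    rcases absorb_eq hw p s with h1 | h1 <;> rw [h1] at h ⊢
    · rw [show basc (n + 1) (w * ins (n + 1 : ℕ) (pos p s)) = basc n w + 1 by omega]
      ring
    · rw [show basc (n + 1) (w * ins (n + 1 : ℕ) (pos p s)) = basc n w by omega]
      ring
  rw [Finset.sum_product]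
  calc _ = ∑ p ∈ Finset.range (n + 1), (2 * F (basc n w + 1) +
        (absorb n w p true + absorb n w p false) * (F (basc n w) - F (basc n w + 1))) := by
        refine Finset.sum_congr rfl fun p hp => ?_
        rw [Fintype.sum_bool, hF p hp, hF p hp]
        ring
    _ = _ := by
        rw [Finset.sum_add_distrib, ← Finset.sum_mul (f := fun p => absorb n w p true + absorb n w p false),
          sum_absorb hn hw]
        simp
        ring

lemma basc_le {n : ℕ} (hn : 1 ≤ n) {w : Equiv.Perm ℤ} (hw : InXn n w) : basc n w ≤ n := by
  have h := sum_absorb hn hw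
  have h2 : ∑ p ∈ Finset.range (n + 1), (absorb n w p true + absorb n w p false)
      ≤ ∑ p ∈ Finset.range (n + 1), 2 := by
    refine Finset.sum_le_sum fun p _ => ?_
    have := absorb_eq hw p true
    have := absorb_eq hw p false
    omega
  simp at h2
  omega

/-! ### The induction on `n` -/

lemma choose_identity (n r k : ℕ) (hk : k ≤ n) :
    (2 * (k : ℤ) + 1) * ((n + 1 + r - k).choose (n + 1) : ℕ)
      + (2 * (n : ℤ) + 1 - 2 * k) * ((n + 1 + r - (k + 1)).choose (n + 1) : ℕ)
      = (2 * (r : ℤ) + 1) * ((n + r - k).choose n : ℕ) := by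
  by_cases h : r < k
  · rw [Nat.choose_eq_zero_of_lt (by omega), Nat.choose_eq_zero_of_lt (by omega),
      Nat.choose_eq_zero_of_lt (by omega)]
    simp
  · obtain ⟨d, rfl⟩ : ∃ d, r = k + d := ⟨r - k, by omega⟩
    rw [show n + 1 + (k + d) - k = n + d + 1 by omega,
      show n + 1 + (k + d) - (k + 1) = n + d by omega,
      show n + (k + d) - k = n + d by omega, Nat.choose_succ_succ]
    have h1 := Nat.choose_succ_right_eq (n + d) n
    rw [show n + d - n = d by omega] at h1
    have h2 : ((n + d).choose (n + 1) : ℤ) * (n + 1) = (n + d).choose n * d := by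
      exact_mod_cast h1
    push_cast
    linear_combination 2 * h2

lemma inXn_one_iff (w : Equiv.Perm ℤ) : InXn 1 w ↔ w = 1 := by
  constructor
  · intro hw
    have h0 := signed_zero hw.1
    have hb := abs_le.1 (signed_symm_bound hw.1 (i := 1) (by simp))
    have hp := hw.2
    have h1 : w 1 = 1 := by
      have : w.symm 1 = 1 := by push_cast at hb; omega
      rw [Equiv.symm_apply_eq] at this
      exact this.symm
    ext i
    by_cases hi : (1 : ℤ) < |i|
    · simpa using hw.1.2 i (by simpa using hi)
    · obtain rfl | rfl | rfl : i = 0 ∨ i = 1 ∨ i = -1 := by grind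
      · simpa using h0
      · simpa using h1
      · rw [hw.1.1, h1]
        simp
  · rintro rfl
    refine ⟨⟨by simp, by simp⟩, ?_⟩
    change (0 : ℤ) < 1
    norm_num

/-- `X_n` is finite and satisfies the identity. The finset is carried along existentially, since
finiteness of `X_{n+1}` comes from its description as the set of insertions into `X_n`. -/
lemma worpitzky_finset (n : ℕ) : ∃ S : Finset (Equiv.Perm ℤ), (∀ w, w ∈ S ↔ InXn (n + 1) w) ∧
    ∀ r : ℕ, ∑ w ∈ S, ((n + 1 + r - basc (n + 1) w).choose (n + 1) : ℤ)
      = (r + 1) * (2 * r + 1) ^ n := by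
  induction n with
  | zero =>
    refine ⟨{1}, fun w => by rw [Finset.mem_singleton, inXn_one_iff], fun r => ?_⟩
    have h1 : InXn 1 1 := (inXn_one_iff 1).2 rfl
    have hb : basc 1 1 = 0 := by
      have := basc_eq_sum le_rfl h1.1
      simp [ext, bigAsc, lll_iff] at this
      exact this
    simp [hb]
    ring
  | succ n ih =>
    obtain ⟨S, hS, hsum⟩ := ih
    refine ⟨(S ×ˢ (Finset.range (n + 1 + 1) ×ˢ (Finset.univ : Finset Bool))).image
      (fun x => x.1 * ins (n + 1 + 1 : ℕ) (pos x.2.1 x.2.2)), fun w => ?_, fun r => ?_⟩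
    · simp only [Finset.mem_image, Finset.mem_product, Finset.mem_range, Finset.mem_univ, and_true,
        Prod.exists]
      constructor
      · rintro ⟨v, p, s, ⟨hv, hp⟩, rfl⟩
        exact inXn_mul_ins (by omega) ((hS v).1 hv) (pos_range hp s)
      · intro hw
        obtain ⟨v, j, hv, hj, rfl⟩ := exists_eq_mul_ins (by omega) hw
        obtain ⟨p, s, hp, hps⟩ : ∃ p s, p < n + 1 + 1 ∧ pos p s = j := by
          refine ⟨j.natAbs - 1, decide (0 < j), by omega, ?_⟩
          unfold pos
          by_cases h : 0 < j
          · simp only [h, decide_true, if_true]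
            omega
          · simp only [h, decide_false]
            rw [if_neg (by simp)]
            omega
        exact ⟨v, p, s, ⟨(hS v).2 hv, hp⟩, by rw [hps]⟩
    · rw [Finset.sum_image]
      · rw [Finset.sum_product]
        calc _ = ∑ w ∈ S, (2 * (r : ℤ) + 1) * ((n + 1 + r - basc (n + 1) w).choose (n + 1) : ℤ) := by
              refine Finset.sum_congr rfl fun w hw => ?_
              have hw' := (hS w).1 hw
              rw [← choose_identity (n + 1) r _ (basc_le (by omega) hw')]
              exact sum_children (by omega) hw'
                (fun b => ((n + 1 + 1 + r - b).choose (n + 1 + 1) : ℤ))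
          _ = _ := by
              rw [← Finset.mul_sum, hsum r]
              ring
      · rintro ⟨v, p, s⟩ hx ⟨v', p', s'⟩ hx' h
        simp only [Finset.coe_product, Set.mem_prod, Finset.mem_coe, Finset.mem_range] at hx hx'
        obtain ⟨h1, h2⟩ := mul_ins_injective ((hS v).1 hx.1).1 ((hS v').1 hx'.1).1
          (pos_range hx.2.1 s) (pos_range hx'.2.1 s') h
        obtain ⟨h3, h4⟩ := pos_inj h2
        rw [h1, h3, h4]

/-- Worpitzky-type identity for the fundamental parallelepiped `Π_{C_n}`.
For every `n ≥ 1` and every `r ≥ 0`,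
`Σ_{w ∈ X_n} C(n + r - basc(w), n) = (r+1)(2r+1)^{n-1}`. -/
theorem worpitzky_parallelepiped (n : ℕ) (hn : 1 ≤ n) (r : ℕ) :
    ∑ᶠ w ∈ {w : Equiv.Perm ℤ | InXn n w}, Nat.choose (n + r - basc n w) n
      = (r + 1) * (2 * r + 1) ^ (n - 1) := by
  obtain ⟨m, rfl⟩ : ∃ m, n = m + 1 := ⟨n - 1, by omega⟩
  obtain ⟨S, hS, hsum⟩ := worpitzky_finset m
  have hset : {w : Equiv.Perm ℤ | InXn (m + 1) w} = (S : Set (Equiv.Perm ℤ)) := by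
    ext w
    simp [hS]
  rw [hset, finsum_mem_coe_finset, Nat.add_sub_cancel]
  exact_mod_cast hsum r
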